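/- Let ω : ℝ³ → ℝ³ be a smooth, compactly supported, divergence-free vector field, and let V(x) = −(1/4π) ∫_{ℝ³} ((x − x′) × ω(x′))/‖x − x′‖³ dx′ be the associated Biot–Savart velocity field. Then V is square-integrable and the kinetic energy admits the double-integral representation (1/2) ∫_{ℝ³} ‖V(x)‖² dx = (1/8π) ∫_{ℝ³} ∫_{ℝ³} (ω(x) · ω(x′))/‖x − x′‖ dx′ dx. -/

import Mathlib

open MeasureTheory Real

/-- The cross product on `ℝ³`. -/
noncomputable def cross3 (a b : EuclideanSpace ℝ (Fin 3)) : EuclideanSpace ℝ (Fin 3) :=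
  (WithLp.equiv 2 (Fin 3 → ℝ)).symm
    ![a 1 * b 2 - a 2 * b 1, a 2 * b 0 - a 0 * b 2, a 0 * b 1 - a 1 * b 0]

/-- The divergence `∇ · V` of a vector field on `ℝ³`. -/
noncomputable def div3 (V : EuclideanSpace ℝ (Fin 3) → EuclideanSpace ℝ (Fin 3))
    (x : EuclideanSpace ℝ (Fin 3)) : ℝ :=
  ∑ i : Fin 3, fderiv ℝ V x (EuclideanSpace.single i (1 : ℝ)) i

/-!
Write `K z = z / ‖z‖ ^ n` for the Coulomb field. By Lagrange's identity for cross products,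
`16 π² ‖V x‖ ^ 2` is the integral over `(y, z)` of
`⟪K (x - y), K (x - z)⟫ * ⟪ω y, ω z⟫ - ⟪K (x - y), ω z⟫ * ⟪K (x - z), ω y⟫`,
and the `x`-integral of each of the two terms can be computed first. In polar coordinates around
`y` the Jacobian cancels the norm `‖x - y‖ ^ (1 - n)` of the first field, so the radial integrand of
`⟪K (x - y), K (x - z)⟫` is, up to sign, the derivative of the potential of `K` along a ray: the
first term yields the interaction energy of two point charges, `4 π / ‖y - z‖` in dimension three.
In the second term the reflection `x ↦ y + z - x` exchanges `ω y` and `ω z`, which turns the triple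
integral into that of `(∫ y, ⟪K (x - y), ω y⟫) ^ 2` over `x`; it vanishes because `K` is a gradient
and `ω` is divergence free.

Absolute convergence is delicate: for `n = 3` the norm `k = ‖K‖` is integrable near the origin but
not near infinity, and `k ^ 2` is integrable near infinity but not near the origin. However,
`min k (k ^ 2)` is integrable, and it still controls the products `‖K (x - y)‖ * ‖K (x - z)‖`.
-/

open Filter Metric Module Set
open scoped Pointwise RealInnerProductSpace Topology

lemma mul_le_min_sq_mul_min_sq_add {s t : ℝ} (hs : 0 ≤ s) (ht : 0 ≤ t) :
    s * t ≤ min s (s ^ 2) * min t (t ^ 2) + (min s (s ^ 2) + min t (t ^ 2)) := by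
  have min_of_le {u : ℝ} (hu : 0 ≤ u) (hu1 : u ≤ 1) : min u (u ^ 2) = u ^ 2 :=
    min_eq_right (pow_le_of_le_one hu hu1 two_ne_zero)
  have min_of_ge {u : ℝ} (hu1 : 1 ≤ u) : min u (u ^ 2) = u :=
    min_eq_left (le_self_pow₀ hu1 two_ne_zero)
  rcases le_total s 1 with hs1 | hs1 <;> rcases le_total t 1 with ht1 | ht1
  · rw [min_of_le hs hs1, min_of_le ht ht1]
    nlinarith [sq_nonneg (s - t), mul_nonneg (sq_nonneg s) (sq_nonneg t)]
  · rw [min_of_le hs hs1, min_of_ge ht1]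
    nlinarith [mul_nonneg (sq_nonneg s) ht]
  · rw [min_of_ge hs1, min_of_le ht ht1]
    nlinarith [mul_nonneg hs (sq_nonneg t)]
  · rw [min_of_ge hs1, min_of_ge ht1]
    linarith

lemma le_min_sq_add_one {s : ℝ} : s ≤ min s (s ^ 2) + 1 := by
  rcases le_total s (s ^ 2) with h | h
  · rw [min_eq_left h]
    linarith
  · rw [min_eq_right h]
    nlinarith [sq_nonneg (s - 1)]

section TripleProducts

variable {X Y Z G : Type*} [MeasurableSpace X] [MeasurableSpace Y] [MeasurableSpace Z]
  [MeasurableSpace G] {μ : Measure X} {ν : Measure Y} {ρ : Measure Z} [SFinite ν] [SFinite ρ]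

lemma measurePreserving_prodAssoc_symm :
    MeasurePreserving (fun p : X × Y × Z ↦ ((p.1, p.2.1), p.2.2)) (μ.prod (ν.prod ρ))
      ((μ.prod ν).prod ρ) :=
  (measurePreserving_prodAssoc μ ν ρ).symm

lemma integrable_uncurry_mul {f : X × Y → ℝ} {g : Z → ℝ} (hf : Integrable f (μ.prod ν))
    (hg : Integrable g ρ) :
    Integrable (fun p : X × Y × Z ↦ f (p.1, p.2.1) * g p.2.2) (μ.prod (ν.prod ρ)) :=
  measurePreserving_prodAssoc_symm.integrable_comp_of_integrable (hf.mul_prod hg)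

variable [AddCommGroup G] [MeasurableAdd₂ G] [MeasurableNeg G] {η : Measure G} [SFinite η]
  [η.IsAddLeftInvariant] [η.IsNegInvariant]

lemma integrable_uncurry_mul_sub {f : G × Y → ℝ} {g : G → ℝ} (hf : Integrable f (η.prod ν))
    (hg : Integrable g η) :
    Integrable (fun p : G × Y × G ↦ f (p.1, p.2.1) * g (p.1 - p.2.2)) (η.prod (ν.prod η)) := by
  have hshear : MeasurePreserving (fun p : (G × Y) × G ↦ (p.1, p.1.1 - p.2))
      ((η.prod ν).prod η) ((η.prod ν).prod η) :=
    (MeasurePreserving.id _).skew_product (g := fun (p : G × Y) z ↦ p.1 - z) (by fun_prop)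
      (.of_forall fun p ↦ (Measure.measurePreserving_sub_left η p.1).map_eq)
  exact (hshear.comp measurePreserving_prodAssoc_symm).integrable_comp_of_integrable
    (hf.mul_prod hg)

end TripleProducts

section Divergence

variable {E : Type*} [NormedAddCommGroup E] [NormedSpace ℝ E] [MeasurableSpace E]
  [BorelSpace E] (μ : Measure E)

lemma integrable_fderiv_apply_mul [IsFiniteMeasureOnCompacts μ] {φ f : E → ℝ}
    (hφ : ContDiff ℝ 1 φ) (hf : Continuous f) (hsupp : HasCompactSupport f) (v : E) :
    Integrable (fun x ↦ fderiv ℝ φ x v * f x) μ := by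
  have := hφ.continuous_fderiv one_ne_zero
  exact (Continuous.mul (by fun_prop) hf).integrable_of_hasCompactSupport hsupp.mul_left

lemma integrable_mul_fderiv_apply [IsFiniteMeasureOnCompacts μ] {φ f : E → ℝ}
    (hφ : Continuous φ) (hf : ContDiff ℝ 1 f) (hsupp : HasCompactSupport f) (v : E) :
    Integrable (fun x ↦ φ x * fderiv ℝ f x v) μ := by
  have := hf.continuous_fderiv one_ne_zero
  exact (hφ.mul (by fun_prop)).integrable_of_hasCompactSupport (hsupp.fderiv_apply ℝ v).mul_left

variable [FiniteDimensional ℝ E] [μ.IsAddHaarMeasure]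

lemma integral_fderiv_apply_mul_eq_neg {φ f : E → ℝ} (hφ : ContDiff ℝ 1 φ)
    (hf : ContDiff ℝ 1 f) (hsupp : HasCompactSupport f) (v : E) :
    ∫ x, fderiv ℝ φ x v * f x ∂μ = -∫ x, φ x * fderiv ℝ f x v ∂μ := by
  exact neg_eq_iff_eq_neg.1 (integral_mul_fderiv_eq_neg_fderiv_mul_of_integrable
    (integrable_fderiv_apply_mul μ hφ hf.continuous hsupp v)
    (integrable_mul_fderiv_apply μ hφ.continuous hf hsupp v)
    ((hφ.continuous.mul hf.continuous).integrable_of_hasCompactSupport hsupp.mul_left)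
    (fun x _ ↦ hφ.differentiable one_ne_zero x) (fun x _ ↦ hf.differentiable one_ne_zero x)).symm

lemma integral_fderiv_apply_eq_neg_integral_mul_trace {φ : E → ℝ} {ω : E → E}
    (hφ : ContDiff ℝ 1 φ) (hω : ContDiff ℝ 1 ω) (hsupp : HasCompactSupport ω) :
    ∫ x, fderiv ℝ φ x (ω x) ∂μ = -∫ x, φ x * LinearMap.trace ℝ E (fderiv ℝ ω x) ∂μ := by
  let b := finBasis ℝ E
  let f (i : Fin (finrank ℝ E)) (x : E) : ℝ := (b.coord i).toContinuousLinearMap (ω x)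
  have hf (i) : ContDiff ℝ 1 (f i) := (ContinuousLinearMap.contDiff _).comp hω
  have hfs (i) : HasCompactSupport (f i) := hsupp.comp_left (map_zero _)
  have hdf (i) (x v : E) : fderiv ℝ (f i) x v = b.coord i (fderiv ℝ ω x v) := by
    have : HasFDerivAt (f i) ((b.coord i).toContinuousLinearMap ∘L fderiv ℝ ω x) x :=
      (ContinuousLinearMap.hasFDerivAt _).comp x (hω.differentiable one_ne_zero x).hasFDerivAt
    rw [this.fderiv]
    rfl
  calc ∫ x, fderiv ℝ φ x (ω x) ∂μ = ∫ x, ∑ i, fderiv ℝ φ x (b i) * f i x ∂μ := by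
        refine integral_congr_ae (.of_forall fun x ↦ ?_)
        dsimp only
        nth_rw 1 [← b.sum_repr (ω x)]
        simp_rw [map_sum, map_smul, smul_eq_mul, mul_comm]
        rfl
    _ = -∫ x, ∑ i, φ x * fderiv ℝ (f i) x (b i) ∂μ := by
        rw [integral_finsetSum _ fun i _ ↦
            integrable_fderiv_apply_mul μ hφ (hf i).continuous (hfs i) (b i),
          integral_finsetSum _ fun i _ ↦
            integrable_mul_fderiv_apply μ hφ.continuous (hf i) (hfs i) (b i),
          ← Finset.sum_neg_distrib]
        exact Finset.sum_congr rfl fun i _ ↦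
          integral_fderiv_apply_mul_eq_neg μ hφ (hf i) (hfs i) (b i)
    _ = _ := by
        simp_rw [← Finset.mul_sum, hdf, LinearMap.trace_eq_matrix_trace ℝ b, Matrix.trace]
        simp [LinearMap.toMatrix_apply]

end Divergence

section PolarCoordinates

variable {E F : Type*} [NormedAddCommGroup E] [NormedSpace ℝ E] [FiniteDimensional ℝ E]
  [MeasurableSpace E] [BorelSpace E] [NormedAddCommGroup F] [NormedSpace ℝ F]

lemma integrable_volumeIoiPow_iff {n : ℕ} {f : ℝ → F} :
    Integrable (fun r : Ioi (0 : ℝ) ↦ f r) (Measure.volumeIoiPow n) ↔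
      IntegrableOn (fun r ↦ r ^ n • f r) (Ioi 0) := by
  rw [integrableOn_iff_comap_subtypeVal measurableSet_Ioi, Measure.volumeIoiPow,
    integrable_withDensity_iff_integrable_smul' (by fun_prop) (by simp)]
  refine integrable_congr (.of_forall fun ⟨r, (hr : 0 < r)⟩ ↦ ?_)
  simp only [Function.comp_apply, ENNReal.toReal_ofReal (pow_pos hr n).le]

lemma integral_volumeIoiPow (n : ℕ) (f : ℝ → F) :
    ∫ r : Ioi (0 : ℝ), f r ∂Measure.volumeIoiPow n = ∫ r in Ioi 0, r ^ n • f r := by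
  rw [Measure.volumeIoiPow, integral_withDensity_eq_integral_toReal_smul (by fun_prop) (by simp),
    ← integral_subtype_comap measurableSet_Ioi (fun r ↦ r ^ n • f r)]
  refine integral_congr_ae (.of_forall fun ⟨r, (hr : 0 < r)⟩ ↦ ?_)
  simp only [ENNReal.toReal_ofReal (pow_pos hr n).le]

variable (μ : Measure E) [μ.IsAddHaarMeasure]

lemma ae_notMem_submodule_toSphere {W : Submodule ℝ E} (hW : W ≠ ⊤) :
    ∀ᵐ θ : sphere (0 : E) 1 ∂μ.toSphere, (θ : E) ∉ W := by
  have hmeas : MeasurableSet {θ : sphere (0 : E) 1 | (θ : E) ∈ W} :=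
    measurable_subtype_coe W.closed_of_finiteDimensional.measurableSet
  have hcone : Ioo (0 : ℝ) 1 • ((↑) '' {θ : sphere (0 : E) 1 | (θ : E) ∈ W} : Set E) ⊆ W := by
    rintro _ ⟨r, _, _, ⟨θ, hθ, rfl⟩, rfl⟩
    exact W.smul_mem r hθ
  rw [ae_iff]
  simp only [not_not]
  rw [Measure.toSphere_apply' _ hmeas,
    measure_mono_null hcone (Measure.addHaar_submodule μ W hW), mul_zero]

variable [Nontrivial E]

lemma measurePreserving_smul_sphere :
    MeasurePreserving (fun p : sphere (0 : E) 1 × Ioi (0 : ℝ) ↦ (p.2 : ℝ) • (p.1 : E))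
      (μ.toSphere.prod (Measure.volumeIoiPow (finrank ℝ E - 1))) μ := by
  have hpolar := (μ.measurePreserving_homeomorphUnitSphereProd).symm
    (homeomorphUnitSphereProd E).toMeasurableEquiv
  have hcoe := measurePreserving_subtype_coe (μa := μ) (measurableSet_singleton (0 : E)).compl
  rw [restrict_compl_singleton] at hcoe
  exact hcoe.comp hpolar

lemma ae_integrableOn_Ioi_smul_sphere {g : E → F} (hg : Integrable g μ) :
    ∀ᵐ θ : sphere (0 : E) 1 ∂μ.toSphere,
      IntegrableOn (fun r : ℝ ↦ r ^ (finrank ℝ E - 1) • g (r • (θ : E))) (Ioi 0) := by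
  have hpolar := (measurePreserving_smul_sphere μ).integrable_comp_of_integrable hg
  filter_upwards [hpolar.prod_right_ae] with θ hθ
  exact integrable_volumeIoiPow_iff.1 hθ

lemma integral_eq_integral_sphere_integral_Ioi {g : E → F} (hg : Integrable g μ) :
    ∫ x, g x ∂μ =
      ∫ θ : sphere (0 : E) 1, (∫ r in Ioi (0 : ℝ), r ^ (finrank ℝ E - 1) • g (r • (θ : E)))
        ∂μ.toSphere := by
  have hpolar := measurePreserving_smul_sphere μ
  calc ∫ x, g x ∂μ
      = ∫ p : sphere (0 : E) 1 × Ioi (0 : ℝ), g ((p.2 : ℝ) • (p.1 : E))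
          ∂μ.toSphere.prod (Measure.volumeIoiPow (finrank ℝ E - 1)) := by
        have hg' := hg.aestronglyMeasurable
        rw [← hpolar.map_eq] at hg'
        nth_rw 1 [← hpolar.map_eq]
        exact integral_map hpolar.aemeasurable hg'
    _ = _ := (integral_prod _ (hpolar.integrable_comp_of_integrable hg)).trans <|
        integral_congr_ae <| .of_forall fun θ ↦ integral_volumeIoiPow _ fun r ↦ g (r • (θ : E))

end PolarCoordinates

section CoulombField

variable {E : Type*} [NormedAddCommGroup E] [InnerProductSpace ℝ E]

/-- The field `z / ‖z‖ ^ n` of a unit point charge at the origin of an `n`-dimensional space, up to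
a positive constant; its value at `0` is `0`. -/
noncomputable def coulombField (z : E) : E := (‖z‖ ^ finrank ℝ E)⁻¹ • z

/-- The smooth approximation of `coulombField` obtained by replacing `‖z‖ ^ 2` by `‖z‖ ^ 2 + ε`;
the Coulomb field itself is the case `ε = 0`. -/
noncomputable def softCoulombField (ε : ℝ) (z : E) : E :=
  (‖z‖ ^ 2 + ε) ^ (-(finrank ℝ E / 2 : ℝ)) • z

/-- The potential of `softCoulombField`, normalised to vanish at infinity; the sign is the physical
one, so that the field is minus the gradient of the potential. -/
noncomputable def softCoulombPotential (ε : ℝ) (z : E) : ℝ :=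
  (‖z‖ ^ 2 + ε) ^ (1 - finrank ℝ E / 2 : ℝ) / (finrank ℝ E - 2)

lemma softCoulombField_zero : softCoulombField 0 = (coulombField : E → E) := by
  funext z
  rw [softCoulombField, coulombField, add_zero, rpow_neg (sq_nonneg _),
    ← rpow_natCast_mul (norm_nonneg z), Nat.cast_ofNat, mul_div_cancel₀ _ two_ne_zero,
    rpow_natCast]

lemma coulombField_neg (z : E) : coulombField (-z) = -coulombField z := by
  simp only [coulombField, norm_neg, smul_neg]

lemma norm_coulombField (z : E) (hE : 1 < finrank ℝ E) :
    ‖coulombField z‖ = (‖z‖ ^ (finrank ℝ E - 1))⁻¹ := by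
  obtain ⟨n, hn⟩ := Nat.exists_eq_add_of_lt hE
  rcases eq_or_ne z 0 with rfl | hz
  · simp [coulombField, hn]
  have : ‖z‖ ≠ 0 := norm_ne_zero_iff.2 hz
  rw [coulombField, norm_smul, norm_inv, norm_pow, norm_norm, hn, Nat.add_sub_cancel]
  field_simp
  ring

@[fun_prop]
lemma measurable_coulombField [MeasurableSpace E] [BorelSpace E] :
    Measurable (coulombField : E → E) := by
  unfold coulombField
  fun_prop

@[fun_prop]
lemma measurable_softCoulombField [MeasurableSpace E] [BorelSpace E] (ε : ℝ) :
    Measurable (softCoulombField ε : E → E) := by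
  unfold softCoulombField
  fun_prop

lemma pow_mul_inner_coulombField_smul {θ : E} (hθ : ‖θ‖ = 1) {r : ℝ} (hr : 0 < r)
    (hE : 0 < finrank ℝ E) (v : E) :
    r ^ (finrank ℝ E - 1) * ⟪coulombField (r • θ), v⟫ = ⟪θ, v⟫ := by
  obtain ⟨n, hn⟩ := Nat.exists_eq_add_of_lt hE
  rw [coulombField, norm_smul, hθ, mul_one, norm_of_nonneg hr.le, smul_smul, real_inner_smul_left,
    hn, Nat.add_sub_cancel]
  field_simp
  ring

lemma hasFDerivAt_softCoulombPotential {ε : ℝ} {z : E} (hz : 0 < ‖z‖ ^ 2 + ε)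
    (hE : 2 < finrank ℝ E) :
    HasFDerivAt (softCoulombPotential ε) (-innerSL ℝ (softCoulombField ε z)) z := by
  have hn : (finrank ℝ E - 2 : ℝ) ≠ 0 := sub_ne_zero.2 (mod_cast hE.ne')
  have hpow := (((hasStrictFDerivAt_norm_sq z).hasFDerivAt.add_const ε).rpow_const
    (p := 1 - finrank ℝ E / 2) (.inl hz.ne')).mul_const (finrank ℝ E - 2 : ℝ)⁻¹
  convert! hpow using 1
  ext v
  simp only [softCoulombField, map_smul, neg_apply, smul_apply, coe_innerSL_apply, smul_eq_mul,
    sub_sub_cancel_left, nsmul_eq_mul, Nat.cast_ofNat]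
  field_simp
  ring_nf

lemma tendsto_softCoulombPotential_cobounded (ε : ℝ) (hE : 2 < finrank ℝ E) :
    Tendsto (softCoulombPotential ε : E → ℝ) (Bornology.cobounded E) (𝓝 0) := by
  have hexp : 0 < (finrank ℝ E / 2 - 1 : ℝ) := by
    have : (2 : ℝ) < finrank ℝ E := mod_cast hE
    linarith
  have hbase : Tendsto (fun z : E ↦ ‖z‖ ^ 2 + ε) (Bornology.cobounded E) atTop :=
    tendsto_atTop_add_const_right _ _ <|
      (tendsto_pow_atTop two_ne_zero).comp tendsto_norm_cobounded_atTop
  unfold softCoulombPotential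
  simpa using
    ((tendsto_rpow_neg_atTop hexp).comp hbase).div_const (finrank ℝ E - 2 : ℝ)

lemma tendsto_smul_add_cobounded {θ : E} (hθ : θ ≠ 0) (d : E) :
    Tendsto (fun r : ℝ ↦ r • θ + d) atTop (Bornology.cobounded E) := by
  refine (tendsto_add_const_cobounded d).comp (tendsto_norm_atTop_iff_cobounded.1 ?_)
  simpa only [norm_smul] using tendsto_norm_atTop_atTop.atTop_mul_const (norm_pos_iff.2 hθ)

lemma integral_Ioi_inner_coulombField {θ d : E} (hθ : θ ≠ 0) (hd : ∀ r : ℝ, r • θ + d ≠ 0)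
    (hE : 2 < finrank ℝ E)
    (hint : IntegrableOn (fun r : ℝ ↦ ⟪θ, coulombField (r • θ + d)⟫) (Ioi 0)) :
    ∫ r in Ioi (0 : ℝ), ⟪θ, coulombField (r • θ + d)⟫ = softCoulombPotential 0 d := by
  have hderiv (r : ℝ) : HasDerivAt (fun r : ℝ ↦ -softCoulombPotential 0 (r • θ + d))
      ⟪θ, coulombField (r • θ + d)⟫ r := by
    have hline : HasDerivAt (fun r : ℝ ↦ r • θ + d) θ r := by
      simpa using ((hasDerivAt_id r).smul_const θ).add_const d
    have hpos : 0 < ‖r • θ + d‖ ^ 2 + 0 := by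
      have := norm_pos_iff.2 (hd r)
      positivity
    simpa [softCoulombField_zero, real_inner_comm, Function.comp_def] using!
      ((hasFDerivAt_softCoulombPotential hpos hE).comp_hasDerivAt r hline).neg
  have hlim := ((tendsto_softCoulombPotential_cobounded 0 hE).comp
    (tendsto_smul_add_cobounded hθ d)).neg
  rw [integral_Ioi_of_hasDerivAt_of_tendsto' (fun r _ ↦ hderiv r) hint hlim]
  simp

lemma contDiff_softCoulombPotential {ε : ℝ} (hε : 0 < ε) :
    ContDiff ℝ 1 (softCoulombPotential ε : E → ℝ) :=
  ((ContDiff.add (contDiff_norm_sq ℝ) contDiff_const).rpow_const_of_ne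
    fun z ↦ (by positivity)).div_const _

lemma norm_softCoulombField_le {ε : ℝ} (hε : 0 ≤ ε) (z : E) :
    ‖softCoulombField ε z‖ ≤ ‖coulombField z‖ := by
  rcases eq_or_ne z 0 with rfl | hz
  · simp [softCoulombField]
  have : 0 < ‖z‖ := norm_pos_iff.2 hz
  rw [← softCoulombField_zero, softCoulombField, softCoulombField, norm_smul, norm_smul,
    norm_of_nonneg (by positivity), norm_of_nonneg (by positivity)]
  gcongr ?_ * _
  exact rpow_le_rpow_of_nonpos (by positivity) (by linarith) (neg_nonpos.2 (by positivity))

lemma tendsto_softCoulombField (z : E) :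
    Tendsto (fun ε ↦ softCoulombField ε z) (𝓝[>] 0) (𝓝 (coulombField z)) := by
  rcases eq_or_ne z 0 with rfl | hz
  · simp [softCoulombField, coulombField]
  have hz' : ‖z‖ ^ 2 + 0 ≠ 0 := by simpa using hz
  have hcont : ContinuousAt (fun ε ↦ softCoulombField ε z) 0 :=
    ((continuousAt_const.add continuousAt_id).rpow_const (.inl hz')).smul continuousAt_const
  rw [← softCoulombField_zero]
  exact hcont.tendsto.mono_left nhdsWithin_le_nhds

/-- The norm of the Coulomb field near the origin and its square far away. Unlike the norm itself
it is integrable, yet it still controls products of two Coulomb fields. -/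
noncomputable def coulombMajorant (z : E) : ℝ := min ‖coulombField z‖ (‖coulombField z‖ ^ 2)

lemma coulombMajorant_nonneg (z : E) : 0 ≤ coulombMajorant z :=
  le_min (norm_nonneg _) (sq_nonneg _)

lemma coulombMajorant_le_norm (z : E) : coulombMajorant z ≤ ‖coulombField z‖ := min_le_left _ _

lemma norm_coulombField_le (z : E) : ‖coulombField z‖ ≤ coulombMajorant z + 1 :=
  le_min_sq_add_one

lemma norm_coulombField_mul_norm_coulombField_le (z w : E) :
    ‖coulombField z‖ * ‖coulombField w‖ ≤
      coulombMajorant z * coulombMajorant w + (coulombMajorant z + coulombMajorant w) :=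
  mul_le_min_sq_mul_min_sq_add (norm_nonneg _) (norm_nonneg _)

variable {F : Type*} [NormedAddCommGroup F] [InnerProductSpace ℝ F]

/-- The direct term of the inner product of two vortex contributions at `p = (x, y, z)`: Lagrange's
identity splits `⟪K (x - y) × ω y, K (x - z) × ω z⟫`, with `K` the Coulomb field, into this term
minus `exchangeDensity ω p`. -/
noncomputable def directDensity (ω : E → F) (p : E × E × E) : ℝ :=
  ⟪coulombField (p.1 - p.2.1), coulombField (p.1 - p.2.2)⟫ * ⟪ω p.2.1, ω p.2.2⟫

/-- The exchange term of the inner product of two vortex contributions, see `directDensity`. -/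
noncomputable def exchangeDensity (ω : E → E) (p : E × E × E) : ℝ :=
  ⟪coulombField (p.1 - p.2.1), ω p.2.2⟫ * ⟪coulombField (p.1 - p.2.2), ω p.2.1⟫

lemma norm_directDensity_le (ω : E → F) (p : E × E × E) :
    ‖directDensity ω p‖ ≤ (‖coulombField (p.1 - p.2.1)‖ * ‖ω p.2.1‖) *
      (‖coulombField (p.1 - p.2.2)‖ * ‖ω p.2.2‖) := by
  rw [directDensity, norm_mul, mul_mul_mul_comm]
  gcongr <;> exact norm_inner_le_norm _ _

lemma norm_exchangeDensity_le (ω : E → E) (p : E × E × E) :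
    ‖exchangeDensity ω p‖ ≤ (‖coulombField (p.1 - p.2.1)‖ * ‖ω p.2.1‖) *
      (‖coulombField (p.1 - p.2.2)‖ * ‖ω p.2.2‖) := by
  rw [exchangeDensity, norm_mul, mul_mul_mul_comm, mul_comm ‖ω p.2.1‖, ← mul_mul_mul_comm]
  gcongr <;> exact norm_inner_le_norm _ _

end CoulombField

section CoulombIntegrals

variable {E F : Type*} [NormedAddCommGroup E] [InnerProductSpace ℝ E] [FiniteDimensional ℝ E]
  [MeasurableSpace E] [BorelSpace E] [NormedAddCommGroup F] (μ : Measure E) [μ.IsAddHaarMeasure]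

lemma integrable_coulombMajorant (hE : 2 < finrank ℝ E) :
    Integrable (coulombMajorant : E → ℝ) μ := by
  unfold coulombMajorant
  have : Nontrivial E := nontrivial_of_finrank_pos (R := ℝ) (by lia)
  simp only [norm_coulombField _ (one_lt_two.trans hE)]
  rw [integrable_fun_norm_addHaar μ
    (f := fun r ↦ min (r ^ (finrank ℝ E - 1))⁻¹ ((r ^ (finrank ℝ E - 1))⁻¹ ^ 2))]
  refine (integrable_inv_one_add_sq.const_mul 2).integrableOn.mono' (by fun_prop) ?_
  filter_upwards [ae_restrict_mem measurableSet_Ioi] with r (hr : 0 < r)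
  set a := r ^ (finrank ℝ E - 1)
  have ha0 : 0 < a := by positivity
  have hmin : a * min a⁻¹ (a⁻¹ ^ 2) = min 1 a⁻¹ := by
    rw [mul_min_of_nonneg _ _ ha0.le]
    field_simp
  rw [smul_eq_mul, hmin, norm_of_nonneg (by positivity), ← div_eq_mul_inv]
  rcases le_total r 1 with hr1 | hr1
  · refine (min_le_left _ _).trans ?_
    rw [le_div_iff₀ (by positivity)]
    nlinarith
  · have hra : r ^ 2 ≤ a := pow_le_pow_right₀ hr1 (by lia)
    refine (min_le_right _ _).trans ?_
    rw [inv_eq_one_div, div_le_div_iff₀ ha0 (by positivity)]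
    nlinarith

lemma integrable_inner_coulombField_add {d : E} (hd : d ≠ 0) (hE : 2 < finrank ℝ E) :
    Integrable (fun x ↦ ⟪coulombField x, coulombField (x + d)⟫) μ := by
  set ρ := ‖d‖ / 2 with hρ
  have : 0 < ρ := half_pos (norm_pos_iff.2 hd)
  set c := (ρ ^ (finrank ℝ E - 1))⁻¹
  have hbound (z : E) (hz : ρ ≤ ‖z‖) : coulombMajorant z ≤ c := by
    refine (coulombMajorant_le_norm z).trans ?_
    rw [norm_coulombField z (one_lt_two.trans hE)]
    exact inv_anti₀ (by positivity) (by gcongr)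
  have hprod (x : E) : coulombMajorant x * coulombMajorant (x + d) ≤
      c * (coulombMajorant x + coulombMajorant (x + d)) := by
    have h₁ := coulombMajorant_nonneg x
    have h₂ := coulombMajorant_nonneg (x + d)
    have hc : 0 ≤ c := by positivity
    rcases le_total ρ ‖x‖ with hx | hx
    · nlinarith [hbound x hx]
    · have hfar : ρ ≤ ‖x + d‖ := by
        have := norm_sub_le (x + d) x
        rw [add_sub_cancel_left] at this
        linarith
      nlinarith [hbound (x + d) hfar]
  have hint := integrable_coulombMajorant μ hE
  refine ((hint.add (hint.comp_add_right d)).const_mul (c + 1)).mono' (by fun_prop)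
    (.of_forall fun x ↦ (norm_inner_le_norm _ _).trans ?_)
  calc ‖coulombField x‖ * ‖coulombField (x + d)‖
      ≤ _ := norm_coulombField_mul_norm_coulombField_le x (x + d)
    _ ≤ c * (coulombMajorant x + coulombMajorant (x + d)) +
        (coulombMajorant x + coulombMajorant (x + d)) := add_le_add_left (hprod x) _
    _ = (c + 1) * (coulombMajorant x + coulombMajorant (x + d)) := by ring

lemma integral_inner_coulombField_add {d : E} (hd : d ≠ 0) (hE : 2 < finrank ℝ E) :
    ∫ x, ⟪coulombField x, coulombField (x + d)⟫ ∂μ =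
      μ.toSphere.real univ * softCoulombPotential 0 d := by
  have : Nontrivial E := ⟨d, 0, hd⟩
  have hint := integrable_inner_coulombField_add μ hd hE
  have hspan : Submodule.span ℝ {d} ≠ ⊤ := fun h ↦ by
    have := finrank_span_singleton (K := ℝ) hd
    rw [h, finrank_top] at this
    lia
  -- `r ^ (n - 1) • coulombField (r • θ) = θ` turns the radial integrand into a line derivative
  have hradial (θ : sphere (0 : E) 1) (r : ℝ) (hr : r ∈ Ioi 0) :
      r ^ (finrank ℝ E - 1) • ⟪coulombField (r • (θ : E)), coulombField (r • (θ : E) + d)⟫ =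
        ⟪(θ : E), coulombField (r • (θ : E) + d)⟫ :=
    pow_mul_inner_coulombField_smul (norm_eq_of_mem_sphere θ) hr (by lia) _
  rw [integral_eq_integral_sphere_integral_Ioi μ hint, ← smul_eq_mul, ← integral_const]
  refine integral_congr_ae ?_
  filter_upwards [ae_integrableOn_Ioi_smul_sphere μ hint, ae_notMem_submodule_toSphere μ hspan]
    with θ hθ hθd
  rw [setIntegral_congr_fun measurableSet_Ioi (hradial θ)]
  rw [integrableOn_congr_fun (hradial θ) measurableSet_Ioi] at hθ
  refine integral_Ioi_inner_coulombField (ne_zero_of_mem_unit_sphere θ) (fun r h ↦ hθd ?_) hE hθ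
  have hr : r ≠ 0 := by
    rintro rfl
    exact hd (by simpa using h)
  rw [← Submodule.smul_mem_iff _ hr, eq_neg_of_add_eq_zero_left h]
  exact neg_mem (Submodule.mem_span_singleton_self d)

lemma integral_inner_coulombField_sub_sub {y z : E} (hyz : y ≠ z) (hE : 2 < finrank ℝ E) :
    ∫ x, ⟪coulombField (x - y), coulombField (x - z)⟫ ∂μ =
      μ.toSphere.real univ * softCoulombPotential 0 (y - z) := by
  rw [← integral_inner_coulombField_add μ (sub_ne_zero.2 hyz) hE,
    ← integral_sub_right_eq_self (fun x ↦ ⟪coulombField x, coulombField (x + (y - z))⟫) y]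
  simp only [sub_add_sub_cancel]

lemma integrable_norm_coulombField_sub_mul_norm {ω : E → F} (hω : Integrable ω μ) {M : ℝ}
    (hM : ∀ y, ‖ω y‖ ≤ M) (hE : 2 < finrank ℝ E) (x : E) :
    Integrable (fun y ↦ ‖coulombField (x - y)‖ * ‖ω y‖) μ := by
  refine ((((integrable_coulombMajorant μ hE).comp_sub_left x).mul_const M).add hω.norm).mono'
    (.mul (Measurable.aestronglyMeasurable (by fun_prop)) hω.1.norm) (.of_forall fun y ↦ ?_)
  rw [norm_of_nonneg (by positivity)]
  calc ‖coulombField (x - y)‖ * ‖ω y‖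
      ≤ (coulombMajorant (x - y) + 1) * ‖ω y‖ := by gcongr; exact norm_coulombField_le _
    _ = coulombMajorant (x - y) * ‖ω y‖ + ‖ω y‖ := by ring
    _ ≤ coulombMajorant (x - y) * M + ‖ω y‖ := by
      gcongr
      exacts [coulombMajorant_nonneg _, hM y]

lemma integrable_prod_norm_coulombField_sub_mul_norm {ω : E → F} (hω : Integrable ω μ) {M : ℝ}
    (hM : ∀ y, ‖ω y‖ ≤ M) (hE : 2 < finrank ℝ E) :
    Integrable (fun p : E × E × E ↦ (‖coulombField (p.1 - p.2.1)‖ * ‖ω p.2.1‖) *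
      (‖coulombField (p.1 - p.2.2)‖ * ‖ω p.2.2‖)) (μ.prod (μ.prod μ)) := by
  have hmaj := integrable_coulombMajorant μ hE
  have hpair : Integrable (fun q : E × E ↦ ‖ω q.2‖ * coulombMajorant (q.1 - q.2)) (μ.prod μ) :=
    hω.norm.convolution_integrand (.mul ℝ ℝ) hmaj
  have hnear := (integrable_uncurry_mul_sub hpair hmaj).mul_const M
  have hfar := integrable_uncurry_mul hpair hω.norm
  have hfar' := ((MeasurePreserving.id μ).prod
    (Measure.measurePreserving_swap (μ := μ) (ν := μ))).integrable_comp_of_integrable hfar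
  refine (hnear.add (hfar.add hfar')).mono' ?_ (.of_forall fun ⟨x, y, z⟩ ↦ ?_)
  · have h₁ : AEStronglyMeasurable (fun p : E × E × E ↦ ω p.2.1) (μ.prod (μ.prod μ)) :=
      hω.1.comp_fst.comp_snd
    have h₂ : AEStronglyMeasurable (fun p : E × E × E ↦ ω p.2.2) (μ.prod (μ.prod μ)) :=
      hω.1.comp_snd.comp_snd
    exact .mul (.mul (Measurable.aestronglyMeasurable (by fun_prop)) h₁.norm)
      (.mul (Measurable.aestronglyMeasurable (by fun_prop)) h₂.norm)
  rw [norm_of_nonneg (by positivity)]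
  dsimp only [Pi.add_apply, Function.comp_apply, Prod.map, Prod.swap, id]
  have hy := coulombMajorant_nonneg (x - y)
  have hz := coulombMajorant_nonneg (x - z)
  calc (‖coulombField (x - y)‖ * ‖ω y‖) * (‖coulombField (x - z)‖ * ‖ω z‖)
      = (‖coulombField (x - y)‖ * ‖coulombField (x - z)‖) * (‖ω y‖ * ‖ω z‖) := by ring
    _ ≤ (coulombMajorant (x - y) * coulombMajorant (x - z) +
          (coulombMajorant (x - y) + coulombMajorant (x - z))) * (‖ω y‖ * ‖ω z‖) := by
      gcongr
      exact norm_coulombField_mul_norm_coulombField_le _ _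
    _ = ‖ω y‖ * coulombMajorant (x - y) * coulombMajorant (x - z) * ‖ω z‖ +
          (‖ω y‖ * coulombMajorant (x - y) * ‖ω z‖ + ‖ω z‖ * coulombMajorant (x - z) * ‖ω y‖) := by
      ring
    _ ≤ _ := by gcongr; exact hM z

lemma integral_inner_softCoulombField_eq_zero {ω : E → E} (hω : ContDiff ℝ 1 ω)
    (hsupp : HasCompactSupport ω) (hdiv : ∀ x, LinearMap.trace ℝ E (fderiv ℝ ω x) = 0)
    (hE : 2 < finrank ℝ E) {ε : ℝ} (hε : 0 < ε) :
    ∫ x, ⟪softCoulombField ε x, ω x⟫ ∂μ = 0 := by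
  have hgrad (x : E) :
      fderiv ℝ (softCoulombPotential ε) x (ω x) = -⟪softCoulombField ε x, ω x⟫ := by
    rw [(hasFDerivAt_softCoulombPotential (by positivity) hE).fderiv]
    simp
  have := integral_fderiv_apply_eq_neg_integral_mul_trace μ (contDiff_softCoulombPotential hε)
    hω hsupp
  simpa only [hgrad, hdiv, integral_neg, mul_zero, integral_zero, neg_zero, neg_eq_zero] using this

lemma integral_inner_coulombField_eq_zero {ω : E → E} (hω : ContDiff ℝ 1 ω)
    (hsupp : HasCompactSupport ω) (hdiv : ∀ x, LinearMap.trace ℝ E (fderiv ℝ ω x) = 0)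
    (hE : 2 < finrank ℝ E) : ∫ x, ⟪coulombField x, ω x⟫ ∂μ = 0 := by
  obtain ⟨M, hM⟩ := hsupp.exists_bound_of_continuous hω.continuous
  have hbound : Integrable (fun x ↦ ‖coulombField x‖ * ‖ω x‖) μ := by
    simpa [coulombField_neg] using integrable_norm_coulombField_sub_mul_norm μ
      (hω.continuous.integrable_of_hasCompactSupport hsupp) hM hE 0
  have hlim : Tendsto (fun ε ↦ ∫ x, ⟪softCoulombField ε x, ω x⟫ ∂μ) (𝓝[>] 0)
      (𝓝 (∫ x, ⟪coulombField x, ω x⟫ ∂μ)) := by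
    refine tendsto_integral_filter_of_dominated_convergence _ (.of_forall fun ε ↦ ?_) ?_ hbound
      (.of_forall fun x ↦ (tendsto_softCoulombField x).inner tendsto_const_nhds)
    · exact ((measurable_softCoulombField ε).inner
        hω.continuous.measurable).aestronglyMeasurable
    · filter_upwards [self_mem_nhdsWithin] with ε (hε : 0 < ε)
      refine .of_forall fun x ↦ (norm_inner_le_norm _ _).trans ?_
      gcongr
      exact norm_softCoulombField_le hε.le x
  refine tendsto_nhds_unique hlim (tendsto_const_nhds.congr' ?_)
  filter_upwards [self_mem_nhdsWithin] with ε (hε : 0 < ε)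
  exact (integral_inner_softCoulombField_eq_zero μ hω hsupp hdiv hE hε).symm

lemma integral_inner_coulombField_sub_eq_zero {ω : E → E} (hω : ContDiff ℝ 1 ω)
    (hsupp : HasCompactSupport ω) (hdiv : ∀ x, LinearMap.trace ℝ E (fderiv ℝ ω x) = 0)
    (hE : 2 < finrank ℝ E) (x : E) : ∫ y, ⟪coulombField (x - y), ω y⟫ ∂μ = 0 := by
  have htranslate := integral_inner_coulombField_eq_zero μ (ω := fun y ↦ ω (y + x)) (by fun_prop)
    (hsupp.comp_homeomorph (.addRight x)) (fun y ↦ by rw [fderiv_comp_add_right, hdiv]) hE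
  calc ∫ y, ⟪coulombField (x - y), ω y⟫ ∂μ
      = ∫ y, ⟪coulombField (x - (y + x)), ω (y + x)⟫ ∂μ :=
        (integral_add_right_eq_self (fun y ↦ ⟪coulombField (x - y), ω y⟫) x).symm
    _ = -∫ y, ⟪coulombField y, ω (y + x)⟫ ∂μ := by
        simp only [sub_add_cancel_right, coulombField_neg, inner_neg_left, integral_neg]
    _ = 0 := by rw [htranslate, neg_zero]

lemma integrable_directDensity [InnerProductSpace ℝ F] {ω : E → F} (hω : Integrable ω μ) {M : ℝ}
    (hM : ∀ y, ‖ω y‖ ≤ M) (hE : 2 < finrank ℝ E) :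
    Integrable (directDensity ω) (μ.prod (μ.prod μ)) := by
  refine (integrable_prod_norm_coulombField_sub_mul_norm μ hω hM hE).mono' ?_
    (.of_forall (norm_directDensity_le ω))
  exact .mul (Measurable.aestronglyMeasurable (by fun_prop))
    (hω.1.comp_fst.comp_snd.inner hω.1.comp_snd.comp_snd)

lemma integrable_exchangeDensity {ω : E → E} (hω : Integrable ω μ) {M : ℝ} (hM : ∀ y, ‖ω y‖ ≤ M)
    (hE : 2 < finrank ℝ E) : Integrable (exchangeDensity ω) (μ.prod (μ.prod μ)) := by
  refine (integrable_prod_norm_coulombField_sub_mul_norm μ hω hM hE).mono' ?_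
    (.of_forall (norm_exchangeDensity_le ω))
  exact .mul (.inner (Measurable.aestronglyMeasurable (by fun_prop)) hω.1.comp_snd.comp_snd)
    (.inner (Measurable.aestronglyMeasurable (by fun_prop)) hω.1.comp_fst.comp_snd)

lemma integral_directDensity [InnerProductSpace ℝ F] {ω : E → F} (hω : Integrable ω μ) {M : ℝ}
    (hM : ∀ y, ‖ω y‖ ≤ M) (hE : 2 < finrank ℝ E) :
    ∫ p, directDensity ω p ∂μ.prod (μ.prod μ) =
      μ.toSphere.real univ * ∫ y, ∫ z, ⟪ω y, ω z⟫ * softCoulombPotential 0 (y - z) ∂μ ∂μ := by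
  have : Nontrivial E := nontrivial_of_finrank_pos (R := ℝ) (by lia)
  have hint := integrable_directDensity μ hω hM hE
  have hne : ∀ᵐ q : E × E ∂μ.prod μ, q.1 ≠ q.2 := by
    refine (Measure.ae_prod_iff_ae_ae
      (measurableSet_eq_fun measurable_fst measurable_snd).compl).2 ?_
    exact .of_forall fun y ↦ by simp [ae_iff]
  have hinner : (fun q : E × E ↦ ∫ x, directDensity ω (x, q) ∂μ) =ᵐ[μ.prod μ] fun q ↦
      μ.toSphere.real univ * (⟪ω q.1, ω q.2⟫ * softCoulombPotential 0 (q.1 - q.2)) := by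
    filter_upwards [hne] with q hq
    simp only [directDensity, integral_mul_const, integral_inner_coulombField_sub_sub μ hq hE]
    ring
  rw [integral_prod_symm _ hint, integral_congr_ae hinner,
    integral_prod _ (hint.integral_prod_right.congr hinner)]
  simp only [integral_const_mul]

lemma integral_inner_coulombField_mul_inner_comm (y z v w : E) :
    ∫ x, ⟪coulombField (x - y), v⟫ * ⟪coulombField (x - z), w⟫ ∂μ =
      ∫ x, ⟪coulombField (x - y), w⟫ * ⟪coulombField (x - z), v⟫ ∂μ := by
  -- the reflection `x ↦ y + z - x` exchanges `x - y` and `z - x`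
  have hy (x : E) : y + z - x - y = -(x - z) := by abel
  have hz (x : E) : y + z - x - z = -(x - y) := by abel
  rw [← integral_sub_left_eq_self _ μ (y + z)]
  simp only [hy, hz, coulombField_neg, inner_neg_left, neg_mul_neg]
  simp only [mul_comm]

lemma integral_exchangeDensity_eq_zero {ω : E → E} (hω : Integrable ω μ) {M : ℝ}
    (hM : ∀ y, ‖ω y‖ ≤ M) (hE : 2 < finrank ℝ E)
    (horth : ∀ x, ∫ y, ⟪coulombField (x - y), ω y⟫ ∂μ = 0) :
    ∫ p, exchangeDensity ω p ∂μ.prod (μ.prod μ) = 0 := by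
  have hdiag : Integrable (fun p : E × E × E ↦ ⟪coulombField (p.1 - p.2.1), ω p.2.1⟫ *
      ⟪coulombField (p.1 - p.2.2), ω p.2.2⟫) (μ.prod (μ.prod μ)) := by
    refine (integrable_prod_norm_coulombField_sub_mul_norm μ hω hM hE).mono' ?_
      (.of_forall fun p ↦ ?_)
    · exact .mul (.inner (Measurable.aestronglyMeasurable (by fun_prop)) hω.1.comp_fst.comp_snd)
        (.inner (Measurable.aestronglyMeasurable (by fun_prop)) hω.1.comp_snd.comp_snd)
    · rw [norm_mul]
      gcongr <;> exact norm_inner_le_norm _ _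
  calc ∫ p, exchangeDensity ω p ∂μ.prod (μ.prod μ)
      = ∫ q, ∫ x, exchangeDensity ω (x, q) ∂μ ∂μ.prod μ :=
        integral_prod_symm _ (integrable_exchangeDensity μ hω hM hE)
    _ = ∫ q : E × E, ∫ x, ⟪coulombField (x - q.1), ω q.1⟫ * ⟪coulombField (x - q.2), ω q.2⟫
          ∂μ ∂μ.prod μ :=
        integral_congr_ae <| .of_forall fun q ↦
          integral_inner_coulombField_mul_inner_comm μ q.1 q.2 (ω q.2) (ω q.1)
    _ = ∫ x, ∫ q : E × E, ⟪coulombField (x - q.1), ω q.1⟫ * ⟪coulombField (x - q.2), ω q.2⟫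
          ∂μ.prod μ ∂μ := by
        rw [← integral_prod_symm _ hdiag, integral_prod _ hdiag]
    _ = 0 := by
        refine integral_eq_zero_of_ae (.of_forall fun x ↦ ?_)
        let f (y : E) : ℝ := ⟪coulombField (x - y), ω y⟫
        exact (integral_prod_mul f f).trans (mul_eq_zero_of_left (horth x) _)

end CoulombIntegrals

lemma norm_integral_sq_eq_integral_prod_inner {X H : Type*} [MeasurableSpace X] {μ : Measure X}
    [SFinite μ] [NormedAddCommGroup H] [InnerProductSpace ℝ H] [CompleteSpace H] {f : X → H}
    (hf : Integrable f μ) : ‖∫ x, f x ∂μ‖ ^ 2 = ∫ p : X × X, ⟪f p.1, f p.2⟫ ∂μ.prod μ := by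
  rw [← real_inner_self_eq_norm_sq]
  exact (integral_prod_bilin (innerSL ℝ) hf hf).symm

section BiotSavart

local notation "ℝ³" => EuclideanSpace ℝ (Fin 3)

lemma inner_cross3_cross3 (a b c d : ℝ³) :
    ⟪cross3 a b, cross3 c d⟫ = ⟪a, c⟫ * ⟪b, d⟫ - ⟪a, d⟫ * ⟪c, b⟫ := by
  simp only [cross3, PiLp.inner_apply, Fin.sum_univ_three, WithLp.equiv_symm_apply,
    Matrix.cons_val, RCLike.inner_apply, conj_trivial]
  ring

lemma norm_cross3_le (a b : ℝ³) : ‖cross3 a b‖ ≤ ‖a‖ * ‖b‖ := by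
  refine le_of_sq_le_sq ?_ (by positivity)
  rw [← real_inner_self_eq_norm_sq, inner_cross3_cross3, real_inner_self_eq_norm_sq,
    real_inner_self_eq_norm_sq, mul_pow]
  linarith [mul_self_nonneg ⟪a, b⟫]

lemma smul_cross3 (r : ℝ) (a b : ℝ³) : r • cross3 a b = cross3 (r • a) b := by
  ext i
  simp only [cross3, PiLp.smul_apply, WithLp.equiv_symm_apply, smul_eq_mul]
  fin_cases i <;> simp only [Fin.zero_eta, Fin.mk_one, Fin.reduceFinMk, Matrix.cons_val] <;> ring

lemma continuous_cross3 : Continuous fun p : ℝ³ × ℝ³ ↦ cross3 p.1 p.2 := by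
  refine (PiLp.continuous_toLp 2 _).comp (continuous_pi fun i ↦ ?_)
  fin_cases i
  all_goals
    simp only [Fin.zero_eta, Fin.mk_one, Fin.reduceFinMk, Matrix.cons_val]
    fun_prop

lemma trace_fderiv_eq_div3 (V : ℝ³ → ℝ³) (x : ℝ³) :
    LinearMap.trace ℝ ℝ³ (fderiv ℝ V x) = div3 V x := by
  rw [LinearMap.trace_eq_matrix_trace ℝ (EuclideanSpace.basisFun (Fin 3) ℝ).toBasis, Matrix.trace]
  simp [LinearMap.toMatrix_apply, div3]

lemma softCoulombPotential_zero_euclidean3 (z : ℝ³) : softCoulombPotential 0 z = ‖z‖⁻¹ := by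
  rw [softCoulombPotential, finrank_euclideanSpace_fin, add_zero,
    ← rpow_natCast_mul (norm_nonneg z)]
  norm_num [rpow_neg_one]

lemma toSphere_euclidean3_real_univ : (volume : Measure ℝ³).toSphere.real univ = 4 * π := by
  rw [Measure.toSphere_real_apply_univ, finrank_euclideanSpace_fin, measureReal_def,
    EuclideanSpace.volume_ball_fin_three, ENNReal.ofReal_one, one_pow, one_mul,
    ENNReal.toReal_ofReal (by positivity)]
  push_cast
  ring

/-- The Biot–Savart integral of `ω`, without the normalising constant `-1 / (4 * π)`. -/
noncomputable def biotSavartIntegral (ω : ℝ³ → ℝ³) (x : ℝ³) : ℝ³ :=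
  ∫ y, cross3 (coulombField (x - y)) (ω y)

lemma integrable_cross3_coulombField {ω : ℝ³ → ℝ³} (hω : Integrable ω) {M : ℝ}
    (hM : ∀ y, ‖ω y‖ ≤ M) (x : ℝ³) :
    Integrable fun y ↦ cross3 (coulombField (x - y)) (ω y) := by
  have hbound : Integrable fun y ↦ ‖coulombField (x - y)‖ * ‖ω y‖ :=
    integrable_norm_coulombField_sub_mul_norm volume hω hM (by simp) x
  have hK : AEStronglyMeasurable (fun y : ℝ³ ↦ coulombField (x - y)) :=
    Measurable.aestronglyMeasurable (by fun_prop)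
  have hmeas : AEStronglyMeasurable fun y ↦ cross3 (coulombField (x - y)) (ω y) :=
    Continuous.comp_aestronglyMeasurable₂ (g := cross3) continuous_cross3 hK hω.1
  exact hbound.mono' hmeas (.of_forall fun y ↦ norm_cross3_le _ _)

lemma norm_biotSavartIntegral_sq {ω : ℝ³ → ℝ³} (hω : Integrable ω) {M : ℝ}
    (hM : ∀ y, ‖ω y‖ ≤ M) (x : ℝ³) :
    ‖biotSavartIntegral ω x‖ ^ 2 =
      ∫ q : ℝ³ × ℝ³, (directDensity ω (x, q) - exchangeDensity ω (x, q)) := by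
  rw [biotSavartIntegral,
    norm_integral_sq_eq_integral_prod_inner (integrable_cross3_coulombField hω hM x)]
  simp only [inner_cross3_cross3, directDensity, exchangeDensity, Measure.volume_eq_prod]

lemma integrable_norm_biotSavartIntegral_sq {ω : ℝ³ → ℝ³} (hω : Integrable ω) {M : ℝ}
    (hM : ∀ y, ‖ω y‖ ≤ M) : Integrable fun x ↦ ‖biotSavartIntegral ω x‖ ^ 2 := by
  simp only [norm_biotSavartIntegral_sq hω hM]
  exact ((integrable_directDensity volume hω hM (by simp)).sub
    (integrable_exchangeDensity volume hω hM (by simp))).integral_prod_left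

lemma integral_norm_biotSavartIntegral_sq {ω : ℝ³ → ℝ³} (hω : Integrable ω) {M : ℝ}
    (hM : ∀ y, ‖ω y‖ ≤ M) (horth : ∀ x, ∫ y, ⟪coulombField (x - y), ω y⟫ = 0) :
    ∫ x, ‖biotSavartIntegral ω x‖ ^ 2 = 4 * π * ∫ x, ∫ x', ⟪ω x, ω x'⟫ / ‖x - x'‖ := by
  have hdirect := integrable_directDensity volume hω hM (by simp)
  have hexchange := integrable_exchangeDensity volume hω hM (by simp)
  calc ∫ x, ‖biotSavartIntegral ω x‖ ^ 2
      = ∫ p : ℝ³ × ℝ³ × ℝ³, (directDensity ω p - exchangeDensity ω p) := by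
        simp only [norm_biotSavartIntegral_sq hω hM]
        exact (integral_prod _ (hdirect.sub hexchange)).symm
    _ = 4 * π * ∫ x, ∫ x', ⟪ω x, ω x'⟫ / ‖x - x'‖ := by
        simp only [Measure.volume_eq_prod]
        rw [integral_sub hdirect hexchange, integral_directDensity volume hω hM (by simp),
          integral_exchangeDensity_eq_zero volume hω hM (by simp) horth, sub_zero,
          toSphere_euclidean3_real_univ]
        simp only [softCoulombPotential_zero_euclidean3, div_eq_mul_inv]

theorem biot_savart_kinetic_energy_general (ω : ℝ³ → ℝ³) (hω : ContDiff ℝ 1 ω)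
    (hsupp : HasCompactSupport ω) (hdivω : ∀ x, div3 ω x = 0) (V : ℝ³ → ℝ³)
    (hV : ∀ x, V x = (-(4 * π)⁻¹ : ℝ) • ∫ x', (‖x - x'‖ ^ 3)⁻¹ • cross3 (x - x') (ω x')) :
    Integrable (fun x ↦ ‖V x‖ ^ 2) ∧
      (1 / 2) * (∫ x, ‖V x‖ ^ 2) = (8 * π)⁻¹ * ∫ x, ∫ x', ⟪ω x, ω x'⟫ / ‖x - x'‖ := by
  have hint : Integrable ω := hω.continuous.integrable_of_hasCompactSupport hsupp
  obtain ⟨M, hM⟩ := hsupp.exists_bound_of_continuous hω.continuous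
  have horth := integral_inner_coulombField_sub_eq_zero volume hω hsupp
    (fun x ↦ (trace_fderiv_eq_div3 ω x).trans (hdivω x)) (by simp)
  have hnorm (x : ℝ³) : ‖V x‖ ^ 2 = ((4 * π)⁻¹) ^ 2 * ‖biotSavartIntegral ω x‖ ^ 2 := by
    rw [hV, norm_smul, norm_neg, norm_of_nonneg (by positivity), mul_pow, biotSavartIntegral]
    simp only [coulombField, finrank_euclideanSpace_fin, smul_cross3]
  simp only [hnorm]
  refine ⟨(integrable_norm_biotSavartIntegral_sq hint hM).const_mul _, ?_⟩
  rw [integral_const_mul, integral_norm_biotSavartIntegral_sq hint hM horth]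
  field_simp
  ring

end BiotSavart

/-- **Kinetic energy of the Biot–Savart field.**
For a smooth, compactly supported, divergence-free `ω : ℝ³ → ℝ³` with Biot–Savart
velocity field `V`, the field `V` is square-integrable and
`(1/2) ∫ ‖V(x)‖² dx = (1/8π) ∫∫ (ω(x) · ω(x′))/‖x - x′‖ dx′ dx`. -/
theorem biot_savart_kinetic_energy
    (ω : EuclideanSpace ℝ (Fin 3) → EuclideanSpace ℝ (Fin 3))
    (hω : ContDiff ℝ (⊤ : ℕ∞) ω) (hsupp : HasCompactSupport ω)
    (hdivω : ∀ x, div3 ω x = 0)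
    (V : EuclideanSpace ℝ (Fin 3) → EuclideanSpace ℝ (Fin 3))
    (hV : ∀ x, V x = (-(4 * π)⁻¹ : ℝ) •
      ∫ x' : EuclideanSpace ℝ (Fin 3), (‖x - x'‖ ^ 3)⁻¹ • cross3 (x - x') (ω x')) :
    Integrable (fun x : EuclideanSpace ℝ (Fin 3) => ‖V x‖ ^ 2) ∧
    (1 / 2) * (∫ x : EuclideanSpace ℝ (Fin 3), ‖V x‖ ^ 2)
      = (8 * π)⁻¹ * ∫ x : EuclideanSpace ℝ (Fin 3),
          ∫ x' : EuclideanSpace ℝ (Fin 3), (inner ℝ (ω x) (ω x') : ℝ) / ‖x - x'‖ :=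
  biot_savart_kinetic_energy_general ω (hω.of_le (by simp)) hsupp hdivω V hV
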